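/- Let F₁, F₂ : ℝ^n ⇒ ℝ^p be nearly convex set-valued mappings with ri(dom F₁) ∩ ri(dom F₂) ≠ ∅. Then ri(gph(F₁ + F₂)) = {(x, y) ∈ ℝ^n × ℝ^p | x ∈ ri(dom F₁) ∩ ri(dom F₂) and y ∈ ri F₁(x) + ri F₂(x)}, where (F₁ + F₂)(x) = F₁(x) + F₂(x) is the pointwise Minkowski sum. -/

import Mathlib

open Set Metric Pointwise

noncomputable section

/-- A set is *nearly convex* if it lies between a convex set and its closure. -/
def NearlyConvex {E : Type*} [NormedAddCommGroup E] [NormedSpace ℝ E] (s : Set E) : Prop :=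
  ∃ C : Set E, Convex ℝ C ∧ C ⊆ s ∧ s ⊆ closure C

/-- The *relative interior* of a set: points `a ∈ s` admitting `δ > 0` with
`B(a,δ) ∩ aff s ⊆ s`. -/
def ri {E : Type*} [NormedAddCommGroup E] [NormedSpace ℝ E] (s : Set E) : Set E :=
  {a | a ∈ s ∧ ∃ δ > 0, Metric.ball a δ ∩ (affineSpan ℝ s : Set E) ⊆ s}

/-- The graph of a set-valued mapping. -/
def gph {E P : Type*} (F : E → Set P) : Set (E × P) := {q | q.2 ∈ F q.1}

/-- The domain of a set-valued mapping. -/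
def domSV {E P : Type*} (F : E → Set P) : Set E := {x | (F x).Nonempty}

/-!
A nearly convex set has the same relative interior as the convex set it lies over, so an open
segment from a point of `ri s` to a point of `closure s` stays in `ri s`. Conversely a segment from
a point of `s` to a point of `ri s` can be prolonged inside `s`. Since affine maps preserve
segments, `ri` commutes with affine images, and with preimages under affine maps whose range meets
the relative interior.

The fibre of a graph over `x` is its preimage under `y ↦ (x, y)`, and the graph of `F₁ + F₂` is the
preimage of `gph F₁ × gph F₂` under `(x, y₁, y₂) ↦ ((x, y₁), (x, y₂))`, pushed forward by
`(x, y₁, y₂) ↦ (x, y₁ + y₂)`. The qualification condition says exactly that the range of the former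
map meets the relative interior of `gph F₁ × gph F₂`.
-/

section RelativeInterior

variable {E F : Type*} [NormedAddCommGroup E] [NormedSpace ℝ E]
  [NormedAddCommGroup F] [NormedSpace ℝ F]

theorem ri_subset (s : Set E) : ri s ⊆ s := fun _ hx => hx.1

theorem ri_eq_intrinsicInterior (s : Set E) : ri s = intrinsicInterior ℝ s := by
  ext a
  simp only [ri, mem_ofPred_eq, mem_intrinsicInterior, mem_interior_iff_mem_nhds,
    Metric.mem_nhds_iff]
  constructor
  · rintro ⟨ha, δ, hδ, h⟩
    exact ⟨⟨a, subset_affineSpan ℝ s ha⟩, ⟨δ, hδ, fun y hy => h ⟨hy, y.2⟩⟩, rfl⟩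
  · rintro ⟨y, ⟨δ, hδ, h⟩, rfl⟩
    exact ⟨h (mem_ball_self hδ), δ, hδ, fun z hz => @h ⟨z, hz.2⟩ hz.1⟩

theorem ri_prod (s : Set E) (t : Set F) : ri (s ×ˢ t) = ri s ×ˢ ri t := by
  simp only [ri_eq_intrinsicInterior, intrinsicInterior_prod_eq]

theorem ri_subset_ri_of_affineSpan_eq {s t : Set E} (hst : s ⊆ t)
    (hspan : affineSpan ℝ s = affineSpan ℝ t) : ri s ⊆ ri t := by
  rintro x ⟨hx, δ, hδ, h⟩
  exact ⟨hst hx, δ, hδ, hspan ▸ h.trans hst⟩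

theorem preimage_ri_subset_ri_preimage {A : E →ᵃ[ℝ] F} (hA : Continuous A) (t : Set F) :
    A ⁻¹' ri t ⊆ ri (A ⁻¹' t) := by
  rintro x ⟨hx, δ, hδ, h⟩
  obtain ⟨ε, hε, hball⟩ :=
    Metric.mem_nhds_iff.1 (hA.continuousAt.preimage_mem_nhds (ball_mem_nhds (A x) hδ))
  have hspan : affineSpan ℝ (A ⁻¹' t) ≤ (affineSpan ℝ t).comap A :=
    affineSpan_le.2 (preimage_mono (subset_affineSpan ℝ t))
  exact ⟨hx, ε, hε, fun w hw => h ⟨hball hw.1, hspan hw.2⟩⟩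

theorem exists_mem_openSegment_of_mem_ri {s : Set E} {x y : E} (hx : x ∈ ri s)
    (hy : y ∈ affineSpan ℝ s) : ∃ z ∈ s, x ∈ openSegment ℝ y z := by
  obtain ⟨hxs, δ, hδ, h⟩ := hx
  have hnear : ∀ᶠ t : ℝ in nhds 1, AffineMap.lineMap y x t ∈ ball x δ :=
    AffineMap.lineMap_continuous.continuousAt.eventually_mem
      (by simpa only [AffineMap.lineMap_apply_one] using ball_mem_nhds x hδ)
  obtain ⟨t, htball, ht : 1 < t⟩ :=
    ((hnear.filter_mono nhdsWithin_le_nhds).and (self_mem_nhdsWithin (s := Ioi 1))).exists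
  have ht₀ : 0 < t := one_pos.trans ht
  refine ⟨AffineMap.lineMap y x t,
    h ⟨htball, AffineMap.lineMap_mem t hy (subset_affineSpan ℝ s hxs)⟩, ?_⟩
  have hx_eq : AffineMap.lineMap y (AffineMap.lineMap y x t) t⁻¹ = x := by
    rw [AffineMap.lineMap_lineMap_right, inv_mul_cancel₀ ht₀.ne', AffineMap.lineMap_apply_one]
  simpa only [hx_eq] using
    lineMap_mem_openSegment ℝ y (AffineMap.lineMap y x t) ⟨inv_pos.2 ht₀, inv_lt_one_of_one_lt₀ ht⟩

theorem openSegment_intrinsicInterior_intrinsicClosure_subset {C : Set E} (hC : Convex ℝ C)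
    {x y : E} (hx : x ∈ intrinsicInterior ℝ C) (hy : y ∈ intrinsicClosure ℝ C) :
    openSegment ℝ x y ⊆ intrinsicInterior ℝ C := by
  obtain ⟨x, hx, rfl⟩ := hx
  obtain ⟨y, hy, rfl⟩ := hy
  -- In the coordinates `φ` on `affineSpan ℝ C` the claim is about `interior` and `closure`.
  have : Nonempty (affineSpan ℝ C) := ⟨x⟩
  let e : (affineSpan ℝ C).direction ≃ᵃⁱ[ℝ] affineSpan ℝ C :=
    AffineIsometryEquiv.vaddConst ℝ (Classical.arbitrary _)
  let φ : (affineSpan ℝ C).direction →ᵃ[ℝ] E :=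
    (affineSpan ℝ C).subtype.comp e.toAffineEquiv.toAffineMap
  have hint : e ⁻¹' interior ((↑) ⁻¹' C) = interior (φ ⁻¹' C) :=
    e.toHomeomorph.preimage_interior _
  have hclos : e ⁻¹' closure ((↑) ⁻¹' C) = closure (φ ⁻¹' C) :=
    e.toHomeomorph.preimage_closure _
  obtain ⟨u, rfl⟩ := e.surjective x
  obtain ⟨v, rfl⟩ := e.surjective y
  calc openSegment ℝ (φ u) (φ v) = φ '' openSegment ℝ u v := (image_openSegment ℝ φ u v).symm
    _ ⊆ φ '' interior (φ ⁻¹' C) :=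
        image_mono <| (hC.affine_preimage φ).openSegment_interior_closure_subset_interior
          (hint.subset hx) (hclos.subset hy)
    _ ⊆ intrinsicInterior ℝ C := by
        rw [← hint]
        rintro _ ⟨w, hw, rfl⟩
        exact ⟨e w, hw, rfl⟩

theorem closure_subset_affineSpan [FiniteDimensional ℝ E] (s : Set E) :
    closure s ⊆ affineSpan ℝ s :=
  intrinsicClosure_eq_closure ℝ s ▸ intrinsicClosure_subset_affineSpan

theorem openSegment_subset_ri_of_convex [FiniteDimensional ℝ E] {C : Set E} (hC : Convex ℝ C)
    {x y : E} (hx : x ∈ ri C) (hy : y ∈ closure C) : openSegment ℝ x y ⊆ ri C := by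
  rw [ri_eq_intrinsicInterior] at hx ⊢
  rw [← intrinsicClosure_eq_closure ℝ C] at hy
  exact openSegment_intrinsicInterior_intrinsicClosure_subset hC hx hy

theorem ri_nonempty_of_convex [FiniteDimensional ℝ E] {C : Set E} (hC : Convex ℝ C)
    (hne : C.Nonempty) : (ri C).Nonempty :=
  ri_eq_intrinsicInterior C ▸ hne.intrinsicInterior hC

theorem ri_eq_ri_of_convex_of_subset_closure [FiniteDimensional ℝ E] {C s : Set E} (hC : Convex ℝ C)
    (hCs : C ⊆ s) (hsC : s ⊆ closure C) : ri s = ri C := by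
  have hspan : affineSpan ℝ C = affineSpan ℝ s :=
    (affineSpan_mono ℝ hCs).antisymm (affineSpan_le.2 (hsC.trans (closure_subset_affineSpan C)))
  refine Subset.antisymm (fun x hx => ?_) (ri_subset_ri_of_affineSpan_eq hCs hspan)
  have hne : C.Nonempty := closure_nonempty_iff.1 ⟨x, hsC hx.1⟩
  obtain ⟨c, hc⟩ := ri_nonempty_of_convex hC hne
  obtain ⟨z, hz, hxz⟩ := exists_mem_openSegment_of_mem_ri hx
    (subset_affineSpan ℝ s (hCs hc.1))
  exact openSegment_subset_ri_of_convex hC hc (hsC hz) hxz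

end RelativeInterior

namespace NearlyConvex

variable {E F : Type*} [NormedAddCommGroup E] [NormedSpace ℝ E]
  [NormedAddCommGroup F] [NormedSpace ℝ F] {s : Set E}

section Segments

variable [FiniteDimensional ℝ E]

theorem openSegment_subset_ri (hs : NearlyConvex s) {x y : E} (hx : x ∈ ri s)
    (hy : y ∈ closure s) : openSegment ℝ x y ⊆ ri s := by
  obtain ⟨C, hC, hCs, hsC⟩ := hs
  rw [ri_eq_ri_of_convex_of_subset_closure hC hCs hsC] at hx ⊢
  exact openSegment_subset_ri_of_convex hC hx (closure_minimal hsC isClosed_closure hy)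

theorem convex_ri (hs : NearlyConvex s) : Convex ℝ (ri s) :=
  convex_iff_openSegment_subset.2 fun _ hx _ hy =>
    hs.openSegment_subset_ri hx (subset_closure (ri_subset s hy))

theorem ri_nonempty (hs : NearlyConvex s) (hne : s.Nonempty) : (ri s).Nonempty := by
  obtain ⟨C, hC, hCs, hsC⟩ := hs
  rw [ri_eq_ri_of_convex_of_subset_closure hC hCs hsC]
  exact ri_nonempty_of_convex hC (closure_nonempty_iff.1 (hne.mono hsC))

end Segments

theorem prod (hs : NearlyConvex s) {t : Set F} (ht : NearlyConvex t) :
    NearlyConvex (s ×ˢ t) := by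
  obtain ⟨C, hC, hCs, hsC⟩ := hs
  obtain ⟨D, hD, hDt, htD⟩ := ht
  exact ⟨C ×ˢ D, hC.prod hD, prod_mono hCs hDt, (prod_mono hsC htD).trans closure_prod_eq.superset⟩

theorem affine_image [FiniteDimensional ℝ E] (hs : NearlyConvex s) (A : E →ᵃ[ℝ] F) :
    NearlyConvex (A '' s) := by
  obtain ⟨C, hC, hCs, hsC⟩ := hs
  exact ⟨A '' C, hC.affine_image A, image_mono hCs, (image_mono hsC).trans
    (image_closure_subset_closure_image A.continuous_of_finiteDimensional)⟩

theorem affine_preimage [FiniteDimensional ℝ F] {t : Set F} (ht : NearlyConvex t)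
    (A : E →ᵃ[ℝ] F) (hne : (A ⁻¹' ri t).Nonempty) : NearlyConvex (A ⁻¹' t) := by
  obtain ⟨c, hc⟩ := hne
  refine ⟨A ⁻¹' ri t, ht.convex_ri.affine_preimage A, preimage_mono (ri_subset t), fun z hz => ?_⟩
  have hsub : openSegment ℝ c z ⊆ A ⁻¹' ri t := by
    rw [← image_subset_iff, image_openSegment]
    exact ht.openSegment_subset_ri hc (subset_closure hz)
  exact closure_mono hsub (segment_subset_closure_openSegment (right_mem_segment ℝ c z))

variable [FiniteDimensional ℝ E] [FiniteDimensional ℝ F]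

theorem ri_affine_image (hs : NearlyConvex s) (A : E →ᵃ[ℝ] F) : ri (A '' s) = A '' ri s := by
  apply Subset.antisymm
  · intro u hu
    obtain ⟨c, hc⟩ := hs.ri_nonempty (image_nonempty.1 ⟨u, hu.1⟩)
    obtain ⟨_, ⟨w, hw, rfl⟩, huw⟩ := exists_mem_openSegment_of_mem_ri hu
      (subset_affineSpan ℝ _ (mem_image_of_mem A hc.1))
    rw [← image_openSegment] at huw
    exact image_mono (hs.openSegment_subset_ri hc (subset_closure hw)) huw
  · rintro _ ⟨x, hx, rfl⟩
    obtain ⟨_, hc⟩ := (hs.affine_image A).ri_nonempty ⟨_, mem_image_of_mem A hx.1⟩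
    obtain ⟨y, hy, rfl⟩ := ri_subset _ hc
    obtain ⟨z, hz, hxz⟩ := exists_mem_openSegment_of_mem_ri hx (subset_affineSpan ℝ s hy)
    exact (hs.affine_image A).openSegment_subset_ri hc (subset_closure (mem_image_of_mem A hz))
      (image_openSegment ℝ A y z ▸ mem_image_of_mem A hxz)

theorem ri_affine_preimage {t : Set F} (ht : NearlyConvex t) (A : E →ᵃ[ℝ] F)
    (hne : (A ⁻¹' ri t).Nonempty) : ri (A ⁻¹' t) = A ⁻¹' ri t := by
  refine Subset.antisymm (fun x hx => ?_)
    (preimage_ri_subset_ri_preimage A.continuous_of_finiteDimensional t)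
  obtain ⟨c, hc⟩ := hne
  obtain ⟨z, hz, hxz⟩ := exists_mem_openSegment_of_mem_ri hx
    (subset_affineSpan ℝ (A ⁻¹' t) (ri_subset t hc))
  exact ht.openSegment_subset_ri hc (subset_closure hz)
    (image_openSegment ℝ A c z ▸ mem_image_of_mem A hxz)

end NearlyConvex

section Graph

variable {X Y : Type*}

theorem fst_image_gph (G : X → Set Y) : Prod.fst '' gph G = domSV G := by
  ext x
  simp [gph, domSV, Set.Nonempty]

/-- The partial addition of two subsets of a product (Rockafellar's term): points over a common
first coordinate are combined by adding their second coordinates. On graphs it is the pointwise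
Minkowski sum of set-valued mappings. -/
def partialAdd [Add Y] (S T : Set (X × Y)) : Set (X × Y) :=
  {q | ∃ y₁ y₂, (q.1, y₁) ∈ S ∧ (q.1, y₂) ∈ T ∧ y₁ + y₂ = q.2}

theorem gph_add [Add Y] (G₁ G₂ : X → Set Y) :
    gph (fun x => G₁ x + G₂ x) = partialAdd (gph G₁) (gph G₂) := by
  ext ⟨x, y⟩
  simp only [gph, partialAdd, mem_ofPred_eq, Set.mem_add, exists_and_left]

end Graph

section GraphRelativeInterior

variable {E P : Type*} [NormedAddCommGroup E] [NormedSpace ℝ E]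
  [NormedAddCommGroup P] [NormedSpace ℝ P]

variable (E P) in
/-- The linear map `(x, y₁, y₂) ↦ ((x, y₁), (x, y₂))`, which parametrises the pairs of points of
`E × P` lying over a common point of `E`. -/
def pairOver : E × P × P →ₗ[ℝ] (E × P) × (E × P) :=
  (LinearMap.id.prodMap (LinearMap.fst ℝ P P)).prod (LinearMap.id.prodMap (LinearMap.snd ℝ P P))

variable (E P) in
/-- The linear map `(x, y₁, y₂) ↦ (x, y₁ + y₂)`. -/
def sumOver : E × P × P →ₗ[ℝ] E × P :=
  LinearMap.id.prodMap (LinearMap.fst ℝ P P + LinearMap.snd ℝ P P)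

theorem partialAdd_eq_image_preimage (S T : Set (E × P)) :
    partialAdd S T = (sumOver E P).toAffineMap '' ((pairOver E P).toAffineMap ⁻¹' (S ×ˢ T)) := by
  ext ⟨x, y⟩
  constructor
  · rintro ⟨y₁, y₂, h₁, h₂, rfl⟩
    exact ⟨(x, y₁, y₂), ⟨h₁, h₂⟩, rfl⟩
  · rintro ⟨⟨x, y₁, y₂⟩, ⟨h₁, h₂⟩, ⟨⟩⟩
    exact ⟨y₁, y₂, h₁, h₂, rfl⟩

variable [FiniteDimensional ℝ E] [FiniteDimensional ℝ P]

theorem ri_domSV {G : E → Set P} (hG : NearlyConvex (gph G)) :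
    ri (domSV G) = Prod.fst '' ri (gph G) := by
  rw [← fst_image_gph]
  exact hG.ri_affine_image (LinearMap.fst ℝ E P).toAffineMap

theorem ri_fiber {G : E → Set P} (hG : NearlyConvex (gph G)) {x : E} (hx : x ∈ ri (domSV G)) :
    ri (G x) = Prod.mk x ⁻¹' ri (gph G) := by
  rw [ri_domSV hG] at hx
  obtain ⟨⟨x, y⟩, hxy, rfl⟩ := hx
  exact hG.ri_affine_preimage ((AffineMap.const ℝ P x).prod (AffineMap.id ℝ P)) ⟨y, hxy⟩

theorem mem_ri_gph_iff {G : E → Set P} (hG : NearlyConvex (gph G)) {x : E} {y : P} :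
    (x, y) ∈ ri (gph G) ↔ x ∈ ri (domSV G) ∧ y ∈ ri (G x) := by
  constructor
  · intro hxy
    have hx : x ∈ ri (domSV G) := ri_domSV hG ▸ mem_image_of_mem Prod.fst hxy
    exact ⟨hx, (ri_fiber hG hx).superset hxy⟩
  · rintro ⟨hx, hy⟩
    exact (ri_fiber hG hx).subset hy

theorem ri_partialAdd {S T : Set (E × P)} (hS : NearlyConvex S) (hT : NearlyConvex T)
    (hne : (Prod.fst '' ri S ∩ Prod.fst '' ri T).Nonempty) :
    ri (partialAdd S T) = partialAdd (ri S) (ri T) := by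
  obtain ⟨_, ⟨⟨_, y₁⟩, h₁, rfl⟩, ⟨⟨x, y₂⟩, h₂, rfl⟩⟩ := hne
  have hmeets : ((pairOver E P).toAffineMap ⁻¹' ri (S ×ˢ T)).Nonempty :=
    ⟨(x, y₁, y₂), ri_prod S T ▸ ⟨h₁, h₂⟩⟩
  have hST := hS.prod hT
  rw [partialAdd_eq_image_preimage, partialAdd_eq_image_preimage, ← ri_prod,
    ← hST.ri_affine_preimage _ hmeets, (hST.affine_preimage _ hmeets).ri_affine_image]

theorem ri_gph_sum_general {F₁ F₂ : E → Set P}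
    (hF₁ : NearlyConvex (gph F₁)) (hF₂ : NearlyConvex (gph F₂))
    (hqc : (ri (domSV F₁) ∩ ri (domSV F₂)).Nonempty) :
    ri (gph (fun x => F₁ x + F₂ x)) =
      {q : E × P |
        q.1 ∈ ri (domSV F₁) ∩ ri (domSV F₂) ∧ q.2 ∈ ri (F₁ q.1) + ri (F₂ q.1)} := by
  rw [ri_domSV hF₁, ri_domSV hF₂] at hqc
  rw [gph_add, ri_partialAdd hF₁ hF₂ hqc]
  ext ⟨x, y⟩
  simp only [partialAdd, mem_ofPred_eq, mem_ri_gph_iff hF₁, mem_ri_gph_iff hF₂, mem_inter_iff,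
    Set.mem_add]
  constructor
  · rintro ⟨y₁, y₂, ⟨hx₁, hy₁⟩, ⟨hx₂, hy₂⟩, hy⟩
    exact ⟨⟨hx₁, hx₂⟩, y₁, hy₁, y₂, hy₂, hy⟩
  · rintro ⟨⟨hx₁, hx₂⟩, y₁, hy₁, y₂, hy₂, hy⟩
    exact ⟨y₁, y₂, ⟨hx₁, hy₁⟩, ⟨hx₂, hy₂⟩, hy⟩

end GraphRelativeInterior

theorem ri_gph_sum (n p : ℕ)
    (F₁ F₂ : EuclideanSpace ℝ (Fin n) → Set (EuclideanSpace ℝ (Fin p)))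
    (hF₁ : NearlyConvex (gph F₁)) (hF₂ : NearlyConvex (gph F₂))
    (hqc : (ri (domSV F₁) ∩ ri (domSV F₂)).Nonempty) :
    ri (gph (fun x => F₁ x + F₂ x)) =
      {q : EuclideanSpace ℝ (Fin n) × EuclideanSpace ℝ (Fin p) |
        q.1 ∈ ri (domSV F₁) ∩ ri (domSV F₂) ∧ q.2 ∈ ri (F₁ q.1) + ri (F₂ q.1)} :=
  ri_gph_sum_general hF₁ hF₂ hqc
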